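/- arXiv:1209.0068 — 3 statements merged into one kernel-verified Lean document; each statement's English description precedes it below -/
import Mathlib

section
/- Let M be an m×p real matrix of rank p and N an n×p real matrix of rank p. The kernel of the linear map Φ(Ṁ, Ṅ) = Ṁ Nᵀ + M Ṅᵀ equals the set { (M Ṙ, −N Ṙᵀ) : Ṙ ∈ ℝ^{p×p} }; in particular this kernel is a linear subspace of dimension p². -/
open Matrix

/-- The differential of π : (M,N) ↦ M Nᵀ at (M,N). -/
def dPi (m n p : ℕ) (M : Matrix (Fin m) (Fin p) ℝ) (N : Matrix (Fin n) (Fin p) ℝ) :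
    (Matrix (Fin m) (Fin p) ℝ × Matrix (Fin n) (Fin p) ℝ) →ₗ[ℝ] Matrix (Fin m) (Fin n) ℝ where
  toFun d := d.1 * Nᵀ + M * d.2ᵀ
  map_add' a b := by
    simp [Matrix.add_mul, Matrix.mul_add, Matrix.transpose_add]
    abel
  map_smul' c a := by
    simp [Matrix.transpose_smul, Matrix.smul_mul, Matrix.mul_smul, smul_add]

theorem exists_left_inv_of_rank (m p : ℕ) (M : Matrix (Fin m) (Fin p) ℝ) (hM : M.rank = p) :
    ∃ A : Matrix (Fin p) (Fin m) ℝ, A * M = 1 := by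
  have h1 : (Mᵀ * M).rank = p := by rw [Matrix.rank_transpose_mul_self, hM]
  have h2 : LinearMap.range (Mᵀ * M).mulVecLin = ⊤ := by
    apply Submodule.eq_top_of_finrank_eq
    simpa [Matrix.rank] using h1
  have h3 : IsUnit (Mᵀ * M) := by
    rw [← Matrix.mulVec_surjective_iff_isUnit]
    exact LinearMap.range_eq_top.mp h2
  refine ⟨(Mᵀ * M)⁻¹ * Mᵀ, ?_⟩
  rw [Matrix.mul_assoc]
  exact Matrix.nonsing_inv_mul _ ((Matrix.isUnit_iff_isUnit_det _).mp h3)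

/-- The kernel of the differential of π at a full-rank pair (M,N) (the vertical space)
equals { (M Ṙ, −N Ṙᵀ) : Ṙ ∈ ℝ^{p×p} }, a subspace of dimension p². -/
theorem dPi_ker (m n p : ℕ) (hp : 0 < p) (hpm : p ≤ m) (hpn : p ≤ n)
    (M : Matrix (Fin m) (Fin p) ℝ) (N : Matrix (Fin n) (Fin p) ℝ)
    (hM : M.rank = p) (hN : N.rank = p) :
    (LinearMap.ker (dPi m n p M N) : Set (Matrix (Fin m) (Fin p) ℝ × Matrix (Fin n) (Fin p) ℝ)) =
      {d : Matrix (Fin m) (Fin p) ℝ × Matrix (Fin n) (Fin p) ℝ |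
        ∃ R : Matrix (Fin p) (Fin p) ℝ, d.1 = M * R ∧ d.2 = -(N * Rᵀ)} ∧
    Module.finrank ℝ (LinearMap.ker (dPi m n p M N)) = p ^ 2 := by
  obtain ⟨A, hA⟩ := exists_left_inv_of_rank m p M hM
  obtain ⟨B, hB⟩ := exists_left_inv_of_rank n p N hN
  have hB' : Nᵀ * Bᵀ = 1 := by rw [← Matrix.transpose_mul, hB, Matrix.transpose_one]
  have key : ∀ d : Matrix (Fin m) (Fin p) ℝ × Matrix (Fin n) (Fin p) ℝ,
      d ∈ LinearMap.ker (dPi m n p M N) ↔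
        ∃ R : Matrix (Fin p) (Fin p) ℝ, d.1 = M * R ∧ d.2 = -(N * Rᵀ) := by
    rintro ⟨a, b⟩
    rw [LinearMap.mem_ker]
    change a * Nᵀ + M * bᵀ = 0 ↔ ∃ R : Matrix (Fin p) (Fin p) ℝ, a = M * R ∧ b = -(N * Rᵀ)
    constructor
    · intro h
      have h' : a * Nᵀ = -(M * bᵀ) := eq_neg_of_add_eq_zero_left h
      have ha : a = M * (-(bᵀ * Bᵀ)) := by
        calc a = a * Nᵀ * Bᵀ := by rw [Matrix.mul_assoc, hB', Matrix.mul_one]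
          _ = _ := by rw [h', Matrix.neg_mul, Matrix.mul_neg, Matrix.mul_assoc]
      refine ⟨-(bᵀ * Bᵀ), ha, ?_⟩
      generalize -(bᵀ * Bᵀ) = R at ha
      have h2 : R * Nᵀ = -bᵀ := by
        calc R * Nᵀ = A * M * (R * Nᵀ) := by rw [hA, Matrix.one_mul]
          _ = A * (a * Nᵀ) := by rw [ha]; simp only [Matrix.mul_assoc]
          _ = -(A * M * bᵀ) := by rw [h', Matrix.mul_neg, Matrix.mul_assoc]
          _ = _ := by rw [hA, Matrix.one_mul]
      have h3 := congrArg Matrix.transpose h2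
      rw [Matrix.transpose_mul, Matrix.transpose_transpose, Matrix.transpose_neg,
        Matrix.transpose_transpose] at h3
      rw [h3, neg_neg]
    · rintro ⟨R, rfl, rfl⟩
      simp [Matrix.transpose_mul, Matrix.mul_assoc]
  refine ⟨Set.ext key, ?_⟩
  let f : Matrix (Fin p) (Fin p) ℝ →ₗ[ℝ] Matrix (Fin m) (Fin p) ℝ × Matrix (Fin n) (Fin p) ℝ :=
    { toFun := fun R => (M * R, -(N * Rᵀ))
      map_add' := by
        intro x y
        ext1
        · exact Matrix.mul_add _ _ _
        · simp [Matrix.mul_add, add_comm]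
      map_smul' := by
        intro c x
        ext1 <;> simp }
  have hf : LinearMap.range f = LinearMap.ker (dPi m n p M N) := by
    ext d
    rw [key d]
    constructor
    · rintro ⟨R, rfl⟩
      exact ⟨R, rfl, rfl⟩
    · rintro ⟨R, h1, h2⟩
      exact ⟨R, Prod.ext h1.symm h2.symm⟩
  have hinj : Function.Injective f := by
    intro x y h
    have h1 : M * x = M * y := congrArg Prod.fst h
    have h2 := congrArg (fun z => A * z) h1
    simpa only [← Matrix.mul_assoc, hA, Matrix.one_mul] using h2
  rw [← hf, LinearMap.finrank_range_of_inj hinj, Module.finrank_matrix]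
  simp [sq]
end

section
/- Let M be an m×p real matrix of rank p, N an n×p real matrix of rank p, and let Ẋ ∈ ℝ^{m×n} lie in the range of the map (Ṁ,Ṅ) ↦ Ṁ Nᵀ + M Ṅᵀ. Let K be the (unique) solution of the Sylvester equation MᵀM NᵀN K + K MᵀM NᵀN = Mᵀ Ẋ N, and set Ẋ_M = (Ẋ N − M NᵀN K)(NᵀN)⁻¹ and Ẋ_N = (Ẋᵀ M − N MᵀM Kᵀ)(MᵀM)⁻¹. Then (Ẋ_M, Ẋ_N) satisfies the horizontality condition NᵀN MᵀẊ_M = Ẋ_Nᵀ N MᵀM together with Ẋ_M Nᵀ + M Ẋ_Nᵀ = Ẋ, and it is the unique pair with these two properties. -/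
open Matrix

theorem aux_isUnit {m p : ℕ} (M : Matrix (Fin m) (Fin p) ℝ) (hM : M.rank = p) :
    IsUnit (Mᵀ * M).det := by
  rw [← Matrix.isUnit_iff_isUnit_det]
  rw [← Matrix.mulVec_surjective_iff_isUnit]
  have h : (Mᵀ * M).rank = p := by rw [Matrix.rank_transpose_mul_self, hM]
  have h2 : LinearMap.range (Mᵀ * M).mulVecLin = ⊤ := by
    apply Submodule.eq_top_of_finrank_eq
    rw [← Matrix.rank, h]; simp
  exact LinearMap.range_eq_top.mp h2

theorem aux_tr {m n : ℕ} (U : Matrix (Fin m) (Fin n) ℝ) : 0 ≤ (Uᵀ * U).trace := by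
  simp only [Matrix.trace, Matrix.diag, Matrix.mul_apply, Matrix.transpose_apply]
  exact Finset.sum_nonneg fun i _ => Finset.sum_nonneg fun j _ => mul_self_nonneg _

theorem aux_syl {m n p : ℕ} (M : Matrix (Fin m) (Fin p) ℝ) (N : Matrix (Fin n) (Fin p) ℝ)
    (hM : IsUnit (Mᵀ * M).det) (hN : IsUnit (Nᵀ * N).det) (D : Matrix (Fin p) (Fin p) ℝ)
    (h : Mᵀ * M * (Nᵀ * N) * D + D * (Mᵀ * M * (Nᵀ * N)) = 0) : D = 0 := by
  have hAt : (Mᵀ * M)ᵀ = Mᵀ * M := by simp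
  obtain ⟨A, hA⟩ : ∃ A, A = Mᵀ * M := ⟨_, rfl⟩
  obtain ⟨B, hB⟩ : ∃ B, B = Nᵀ * N := ⟨_, rfl⟩
  rw [← hA, ← hB] at h
  rw [← hA] at hM hAt
  rw [← hB] at hN
  have h1 : B * D + A⁻¹ * (D * (A * B)) = 0 := by
    have := congrArg (A⁻¹ * ·) h
    simp only [Matrix.mul_add, Matrix.mul_assoc, Matrix.mul_zero] at this
    rwa [Matrix.nonsing_inv_mul_cancel_left _ _ hM] at this
  have hU : ((N * D * Mᵀ)ᵀ * (N * D * Mᵀ)).trace = (A * Dᵀ * (B * D)).trace := by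
    have : (N * D * Mᵀ)ᵀ * (N * D * Mᵀ) = M * (Dᵀ * B * D * Mᵀ) := by
      rw [hB]; simp [Matrix.mul_assoc]
    rw [this, Matrix.trace_mul_comm, Matrix.mul_assoc, ← hA, Matrix.trace_mul_comm]
    simp [Matrix.mul_assoc]
  have hV : ((M * A⁻¹ * D * A * Nᵀ)ᵀ * (M * A⁻¹ * D * A * Nᵀ)).trace
      = (A * Dᵀ * (A⁻¹ * (D * (A * B)))).trace := by
    have : (M * A⁻¹ * D * A * Nᵀ)ᵀ * (M * A⁻¹ * D * A * Nᵀ)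
        = N * (A * Dᵀ * (A⁻¹ * (D * (A * Nᵀ)))) := by
      have e : (M * A⁻¹ * D * A * Nᵀ)ᵀ * (M * A⁻¹ * D * A * Nᵀ)
        = N * (A * (Dᵀ * (A⁻¹ * (A * (A⁻¹ * (D * (A * Nᵀ))))))) := by
        simp only [Matrix.transpose_mul, Matrix.transpose_transpose, Matrix.transpose_nonsing_inv,
          hAt, Matrix.mul_assoc]
        conv_rhs => rw [hA]
        simp only [hA, Matrix.mul_assoc]
      rw [e, Matrix.nonsing_inv_mul_cancel_left _ _ hM]
      simp only [Matrix.mul_assoc]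
    rw [this, Matrix.trace_mul_comm, hB]
    simp only [Matrix.mul_assoc]
  have hs : ((N * D * Mᵀ)ᵀ * (N * D * Mᵀ)).trace = 0 := by
    have h0 : (A * Dᵀ * (B * D)).trace + (A * Dᵀ * (A⁻¹ * (D * (A * B)))).trace = 0 := by
      rw [← Matrix.trace_add, ← Matrix.mul_add, h1]; simp
    have := aux_tr (N * D * Mᵀ)
    have := aux_tr (M * A⁻¹ * D * A * Nᵀ)
    linarith
  have hz : N * D * Mᵀ = 0 := by
    rw [← Matrix.conjTranspose_eq_transpose_of_trivial] at hs
    exact Matrix.trace_conjTranspose_mul_self_eq_zero_iff.mp hs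
  have hz2 : B * (D * A) = 0 := by
    have : B * (D * A) = Nᵀ * (N * D * Mᵀ) * M := by
      rw [hA, hB]; simp only [Matrix.mul_assoc]
    rw [this, hz]; simp
  calc D = B⁻¹ * (B * (D * A)) * A⁻¹ := by
        rw [Matrix.nonsing_inv_mul_cancel_left _ _ hN, Matrix.mul_nonsing_inv_cancel_right _ _ hM]
    _ = 0 := by rw [hz2]; simp

/-- Horizontal lift in the weighted geometry: the pair (Ẋ_M, Ẋ_N) built from the solution K
of the Sylvester equation is the unique horizontal pair projecting to Ẋ. -/
theorem horizontal_lift_weighted (m n p : ℕ) (hp : 0 < p) (hpm : p ≤ m) (hpn : p ≤ n)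
    (M : Matrix (Fin m) (Fin p) ℝ) (N : Matrix (Fin n) (Fin p) ℝ)
    (hM : M.rank = p) (hN : N.rank = p)
    (X : Matrix (Fin m) (Fin n) ℝ)
    (hX : ∃ (dM : Matrix (Fin m) (Fin p) ℝ) (dN : Matrix (Fin n) (Fin p) ℝ),
        dM * Nᵀ + M * dNᵀ = X)
    (K : Matrix (Fin p) (Fin p) ℝ)
    (hK : Mᵀ * M * (Nᵀ * N) * K + K * (Mᵀ * M * (Nᵀ * N)) = Mᵀ * X * N)
    (XM : Matrix (Fin m) (Fin p) ℝ) (XN : Matrix (Fin n) (Fin p) ℝ)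
    (hXM : XM = (X * N - M * (Nᵀ * N) * K) * (Nᵀ * N)⁻¹)
    (hXN : XN = (Xᵀ * M - N * (Mᵀ * M) * Kᵀ) * (Mᵀ * M)⁻¹) :
    (Nᵀ * N * (Mᵀ * XM) = XNᵀ * N * (Mᵀ * M) ∧ XM * Nᵀ + M * XNᵀ = X) ∧
    ∀ (YM : Matrix (Fin m) (Fin p) ℝ) (YN : Matrix (Fin n) (Fin p) ℝ),
      Nᵀ * N * (Mᵀ * YM) = YNᵀ * N * (Mᵀ * M) → YM * Nᵀ + M * YNᵀ = X →
        YM = XM ∧ YN = XN := by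
  have uA := aux_isUnit M hM
  have uB := aux_isUnit N hN
  have syl := aux_syl M N uA uB
  have hAt : (Mᵀ * M)ᵀ = Mᵀ * M := by simp
  have hBt : (Nᵀ * N)ᵀ = Nᵀ * N := by simp
  have hXNt : XNᵀ = (Mᵀ * M)⁻¹ * (Mᵀ * X - K * (Mᵀ * M) * Nᵀ) := by
    rw [hXN, Matrix.transpose_mul, Matrix.transpose_nonsing_inv, hAt, Matrix.transpose_sub,
      Matrix.transpose_mul, Matrix.transpose_transpose, Matrix.transpose_mul (N * (Mᵀ * M)),
      Matrix.transpose_mul N, hAt, Matrix.transpose_transpose, Matrix.mul_assoc K]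
  clear hXN
  obtain ⟨A, hA⟩ : ∃ A, A = Mᵀ * M := ⟨_, rfl⟩
  obtain ⟨B, hB⟩ : ∃ B, B = Nᵀ * N := ⟨_, rfl⟩
  simp only [← hA, ← hB] at hK hXM hXNt uA uB syl ⊢
  have hMM : ∀ {k : ℕ} (Z : Matrix (Fin p) (Fin k) ℝ), Mᵀ * (M * Z) = A * Z := by
    intro k Z; rw [hA, Matrix.mul_assoc]
  have hNN : ∀ {k : ℕ} (Z : Matrix (Fin p) (Fin k) ℝ), Nᵀ * (N * Z) = B * Z := by
    intro k Z; rw [hB, Matrix.mul_assoc]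
  have a1 : ∀ {k : ℕ} (Z : Matrix (Fin p) (Fin k) ℝ), A * (A⁻¹ * Z) = Z :=
    fun Z => Matrix.mul_nonsing_inv_cancel_left _ _ uA
  have a2 : ∀ {k : ℕ} (Z : Matrix (Fin p) (Fin k) ℝ), A⁻¹ * (A * Z) = Z :=
    fun Z => Matrix.nonsing_inv_mul_cancel_left _ _ uA
  have b1 : ∀ {k : ℕ} (Z : Matrix (Fin p) (Fin k) ℝ), B * (B⁻¹ * Z) = Z :=
    fun Z => Matrix.mul_nonsing_inv_cancel_left _ _ uB
  have b2 : ∀ {k : ℕ} (Z : Matrix (Fin p) (Fin k) ℝ), B⁻¹ * (B * Z) = Z :=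
    fun Z => Matrix.nonsing_inv_mul_cancel_left _ _ uB
  have a3 : A * A⁻¹ = 1 := Matrix.mul_nonsing_inv _ uA
  have b3 : B * B⁻¹ = 1 := Matrix.mul_nonsing_inv _ uB
  refine ⟨⟨?_, ?_⟩, ?_⟩
  · have e1 : Mᵀ * XM = K * A := by
      have : Mᵀ * XM = (Mᵀ * X * N - A * B * K) * B⁻¹ := by
        rw [hXM]; simp only [Matrix.mul_sub, Matrix.sub_mul, Matrix.mul_assoc, hMM]
      rw [this, ← hK, add_sub_cancel_left]
      simp only [Matrix.mul_assoc, b3, Matrix.mul_one]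
    have e2 : XNᵀ * N = B * K := by
      have : XNᵀ * N = A⁻¹ * (Mᵀ * X * N - K * (A * B)) := by
        rw [hXNt]; simp only [Matrix.mul_sub, Matrix.sub_mul, Matrix.mul_assoc, ← hB]
      rw [this, ← hK, add_sub_cancel_right]
      simp only [Matrix.mul_assoc, a2]
    rw [e1, e2, Matrix.mul_assoc]
  · have e1 : X * N * B⁻¹ * Nᵀ + M * A⁻¹ * Mᵀ * X - M * A⁻¹ * (Mᵀ * X * N) * B⁻¹ * Nᵀ = X := by
      obtain ⟨dM, dN, rfl⟩ := hX
      simp only [Matrix.mul_add, Matrix.add_mul, Matrix.mul_assoc, hMM, hNN, a2, b1]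
      abel
    rw [← hK] at e1
    conv_rhs => rw [← e1]
    rw [hXM, hXNt]
    simp only [Matrix.mul_add, Matrix.add_mul, Matrix.mul_sub, Matrix.sub_mul, Matrix.mul_assoc,
      a2, b1]
    abel
  · intro YM YN h1 h2
    obtain ⟨L, hL⟩ : ∃ L, L = Mᵀ * YM * A⁻¹ := ⟨_, rfl⟩
    have l1 : Mᵀ * YM = L * A := by
      rw [hL, Matrix.nonsing_inv_mul_cancel_right _ _ uA]
    have l2 : YNᵀ * N = B * L := by
      rw [hL, ← Matrix.mul_assoc, h1, Matrix.mul_nonsing_inv_cancel_right _ _ uA]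
    have hL2 : A * B * L + L * (A * B) = Mᵀ * X * N := by
      rw [← h2]
      simp only [Matrix.mul_add, Matrix.add_mul, Matrix.mul_assoc, hMM, ← hB, l2]
      rw [← Matrix.mul_assoc Mᵀ YM, l1, Matrix.mul_assoc, add_comm]
    have hLK : L = K := by
      rw [← sub_eq_zero]
      apply syl
      rw [Matrix.mul_sub, Matrix.sub_mul, sub_add_sub_comm, hL2, hK, sub_self]
    subst hLK
    constructor
    · have : X * N - M * B * L = YM * B := by
        rw [← h2]
        simp only [Matrix.add_mul, Matrix.mul_assoc, ← hB, l2]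
        abel
      rw [hXM, this, Matrix.mul_nonsing_inv_cancel_right _ _ uB]
    · have : Mᵀ * X - L * A * Nᵀ = A * YNᵀ := by
        rw [← h2, ← l1]
        simp only [Matrix.mul_add, Matrix.mul_assoc, hMM]
        abel
      rw [this, a2] at hXNt
      exact (Matrix.transpose_injective hXNt).symm
end

section
/- Let M be an m×p real matrix with MᵀM = I_p, N an n×p real matrix of rank p, and (Ṁ, Ṅ) a pair with MᵀṀ + ṀᵀM = 0. Then there is a unique skew-symmetric Ω ∈ ℝ^{p×p} solving (NᵀN + I)Ω + Ω(NᵀN + I) = ṀᵀM − MᵀṀ + ṄᵀN − NᵀṄ, and for this Ω the pair (Ṁ + MΩ, Ṅ + NΩ) is horizontal: Mᵀ(Ṁ + MΩ) is skew-symmetric and Mᵀ(Ṁ + MΩ) + Nᵀ(Ṅ + NΩ) is symmetric. Thus (Ṁ + MΩ, Ṅ + NΩ) is the projection of (Ṁ, Ṅ) onto the horizontal space along the vertical space { (MΩ, NΩ) : Ω = −Ωᵀ }. -/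
open Matrix

theorem aux_trace_nonneg {a b : ℕ} (X : Matrix (Fin a) (Fin b) ℝ) : 0 ≤ (Xᵀ * X).trace := by
  simp only [Matrix.trace, Matrix.diag, Matrix.mul_apply, Matrix.transpose_apply]
  exact Finset.sum_nonneg fun i _ => Finset.sum_nonneg fun j _ => mul_self_nonneg _

theorem aux_inj {n p : ℕ} (N : Matrix (Fin n) (Fin p) ℝ) (X : Matrix (Fin p) (Fin p) ℝ)
    (h : (Nᵀ * N + 1) * X + X * (Nᵀ * N + 1) = 0) : X = 0 := by
  have h1 : (Xᵀ * ((Nᵀ * N + 1) * X + X * (Nᵀ * N + 1))).trace = 0 := by rw [h]; simp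
  have h2 : Xᵀ * ((Nᵀ * N + 1) * X + X * (Nᵀ * N + 1)) =
      (N * X)ᵀ * (N * X) + Xᵀ * X + ((Xᵀ * X * Nᵀ) * N + Xᵀ * X) := by
    simp only [Matrix.transpose_mul, Matrix.mul_add, Matrix.add_mul, Matrix.mul_assoc,
      Matrix.mul_one, Matrix.one_mul]
  have h3 : ((Xᵀ * X * Nᵀ) * N).trace = ((X * Nᵀ)ᵀ * (X * Nᵀ)).trace := by
    rw [Matrix.trace_mul_comm]
    simp only [Matrix.transpose_mul, Matrix.transpose_transpose, Matrix.mul_assoc]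
  rw [h2, Matrix.trace_add, Matrix.trace_add, Matrix.trace_add, h3] at h1
  have a1 := aux_trace_nonneg (N * X)
  have a2 := aux_trace_nonneg (X * Nᵀ)
  have a3 := aux_trace_nonneg X
  have a4 : (Xᵀ * X).trace = 0 := by linarith
  rw [← Matrix.conjTranspose_eq_transpose_of_trivial] at a4
  exact Matrix.trace_conjTranspose_mul_self_eq_zero_iff.mp a4

theorem aux_surj {n p : ℕ} (N : Matrix (Fin n) (Fin p) ℝ) (C : Matrix (Fin p) (Fin p) ℝ) :
    ∃ X, (Nᵀ * N + 1) * X + X * (Nᵀ * N + 1) = C := by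
  let L : Matrix (Fin p) (Fin p) ℝ →ₗ[ℝ] Matrix (Fin p) (Fin p) ℝ :=
    LinearMap.mulLeft ℝ (Nᵀ * N + 1) + LinearMap.mulRight ℝ (Nᵀ * N + 1)
  have hL : Function.Injective L := by
    rw [injective_iff_map_eq_zero]
    intro X hX
    exact aux_inj N X hX
  exact LinearMap.injective_iff_surjective.mp hL C

/-- Horizontal projection in the orthonormal-factor geometry: there is a unique
skew-symmetric Ω solving (NᵀN + I)Ω + Ω(NᵀN + I) = ṀᵀM − MᵀṀ + ṄᵀN − NᵀṄ, and the
resulting pair (Ṁ + MΩ, Ṅ + NΩ) is horizontal. -/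
theorem horizontal_projection_orthonormal (m n p : ℕ)
    (hp : 0 < p) (hpm : p ≤ m) (hpn : p ≤ n)
    (M : Matrix (Fin m) (Fin p) ℝ) (N : Matrix (Fin n) (Fin p) ℝ)
    (hM : Mᵀ * M = 1) (hN : N.rank = p)
    (dM : Matrix (Fin m) (Fin p) ℝ) (dN : Matrix (Fin n) (Fin p) ℝ)
    (htang : Mᵀ * dM + dMᵀ * M = 0) :
    (∃! Ω : Matrix (Fin p) (Fin p) ℝ, Ωᵀ = -Ω ∧
        (Nᵀ * N + 1) * Ω + Ω * (Nᵀ * N + 1) =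
          dMᵀ * M - Mᵀ * dM + dNᵀ * N - Nᵀ * dN) ∧
    ∀ Ω : Matrix (Fin p) (Fin p) ℝ, Ωᵀ = -Ω →
      (Nᵀ * N + 1) * Ω + Ω * (Nᵀ * N + 1) =
          dMᵀ * M - Mᵀ * dM + dNᵀ * N - Nᵀ * dN →
      (Mᵀ * (dM + M * Ω))ᵀ = -(Mᵀ * (dM + M * Ω)) ∧
      (Mᵀ * (dM + M * Ω) + Nᵀ * (dN + N * Ω))ᵀ =
        Mᵀ * (dM + M * Ω) + Nᵀ * (dN + N * Ω) := by
  have huniq : ∀ X Y C : Matrix (Fin p) (Fin p) ℝ,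
      (Nᵀ * N + 1) * X + X * (Nᵀ * N + 1) = C →
      (Nᵀ * N + 1) * Y + Y * (Nᵀ * N + 1) = C → X = Y := by
    intro X Y C hX hY
    refine sub_eq_zero.mp (aux_inj N (X - Y) ?_)
    rw [Matrix.mul_sub, Matrix.sub_mul]
    rw [← hY] at hX
    rw [← sub_eq_zero] at hX
    rw [← hX]
    abel
  refine ⟨?_, ?_⟩
  · obtain ⟨X, hX⟩ := aux_surj N (dMᵀ * M - Mᵀ * dM + dNᵀ * N - Nᵀ * dN)
    refine ⟨X, ⟨?_, hX⟩, fun Y hY => huniq _ _ _ hY.2 hX⟩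
    have h := congrArg (fun Z => -Zᵀ) hX
    simp only [Matrix.transpose_add, Matrix.transpose_sub, Matrix.transpose_mul,
      Matrix.transpose_transpose, Matrix.transpose_one] at h
    have h' : -Xᵀ = X := by
      refine huniq _ _ _ ?_ hX
      rw [Matrix.mul_neg, Matrix.neg_mul, ← neg_add, add_comm, h]
      abel
    rw [← neg_eq_iff_eq_neg]
    exact h'
  · intro Ω hs he
    have e1 : Mᵀ * (dM + M * Ω) = Mᵀ * dM + Ω := by
      rw [Matrix.mul_add, ← Matrix.mul_assoc, hM, Matrix.one_mul]
    have e2 : dMᵀ * M = -(Mᵀ * dM) := by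
      rw [eq_neg_iff_add_eq_zero, add_comm]; exact htang
    rw [e1]
    refine ⟨?_, ?_⟩
    · simp only [Matrix.transpose_add, Matrix.transpose_mul, Matrix.transpose_transpose, hs, e2]
      abel
    · simp only [Matrix.transpose_add, Matrix.transpose_mul, Matrix.transpose_transpose, hs,
        Matrix.mul_add, Matrix.add_mul, Matrix.neg_mul, Matrix.mul_one, Matrix.one_mul,
        Matrix.mul_assoc] at he ⊢
      rw [← sub_eq_zero] at he ⊢
      rw [← neg_eq_zero, ← he]
      abel
end
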